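/- arXiv:1704.07155 — 4 statements merged into one kernel-verified Lean document; each statement's English description precedes it below -/
import Mathlib

section
/- Let (E,d) be a metric space, let r > 0, and let A_1, …, A_M be subsets of E, each of diameter at most r, whose union contains a given finite set X ⊆ E. Define finite sets X_0, X_1, …, X_M by X_0 = X and, for each 0 ≤ i < M: if X_i is nonempty, then X_{i+1} = X_i \ {y ∈ E : d(x_i, y) ≤ r} for some (arbitrary) point x_i ∈ X_i; if X_i is empty, then X_{i+1} = ∅. Then X_M = ∅. -/
/-- Removing the closed `r`-ball around a point of a covered set uses up at least one member of a
cover by sets of diameter at most `r`. -/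
theorem exists_subcover_diff_closedBall {E ι : Type*} [PseudoMetricSpace E] [DecidableEq ι]
    {r : ℝ} (hr : 0 ≤ r) {A : ι → Set E}
    (hdiam : ∀ j, Metric.ediam (A j) ≤ ENNReal.ofReal r) {X : Set E} {S : Finset ι}
    (hcover : X ⊆ ⋃ j ∈ S, A j) {x : E} (hx : x ∈ X) :
    ∃ j ∈ S, X \ {y | dist x y ≤ r} ⊆ ⋃ k ∈ S.erase j, A k := by
  obtain ⟨j, hjS, hxj⟩ := Set.mem_iUnion₂.1 (hcover hx)
  refine ⟨j, hjS, fun y ⟨hyX, hy⟩ => ?_⟩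
  obtain ⟨k, hkS, hyk⟩ := Set.mem_iUnion₂.1 (hcover hyX)
  refine Set.mem_iUnion₂.2 ⟨k, Finset.mem_erase.2 ⟨?_, hkS⟩, hyk⟩
  rintro rfl
  exact hy ((edist_le_ofReal hr).1 ((Metric.edist_le_ediam_of_mem hxj hyk).trans (hdiam k)))

/-- Deterministic core of the stability proof: if a finite set `X₀` in a metric
space is covered by `M` sets each of diameter at most `r`, and at each of `M`
steps we either do nothing (if the current set is empty) or remove an arbitrary
point together with all points within distance `r` of it, then after `M` steps
the set is empty. -/
theorem stmt_0 {E : Type*} [MetricSpace E] (r : ℝ) (hr : 0 < r)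
    (M : ℕ) (A : Fin M → Set E)
    (hdiam : ∀ j, EMetric.diam (A j) ≤ ENNReal.ofReal r)
    (X : ℕ → Set E) (hfin : (X 0).Finite)
    (hcover : X 0 ⊆ ⋃ j, A j)
    (hstep : ∀ i < M,
      ((X i).Nonempty → ∃ x ∈ X i, X (i + 1) = X i \ {y | dist x y ≤ r}) ∧
      (X i = ∅ → X (i + 1) = ∅)) :
    X M = ∅ := by
  have exists_cover : ∀ i ≤ M, ∃ S : Finset (Fin M), S.card + i ≤ M ∧ X i ⊆ ⋃ j ∈ S, A j := by
    intro i
    induction i with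
    | zero => exact fun _ => ⟨Finset.univ, by simp, by simpa using hcover⟩
    | succ i ih =>
      intro hi
      obtain ⟨S, hcard, hS⟩ := ih (by omega)
      obtain ⟨hne, hempty⟩ := hstep i hi
      rcases (X i).eq_empty_or_nonempty with h | h
      · exact ⟨∅, by simpa using hi, by simp [hempty h]⟩
      · obtain ⟨x, hx, hX⟩ := hne h
        obtain ⟨j, hj, hsub⟩ := exists_subcover_diff_closedBall hr.le hdiam hS hx
        have hlt := Finset.card_erase_lt_of_mem hj
        exact ⟨S.erase j, by omega, hX ▸ hsub⟩
  obtain ⟨S, hcard, hS⟩ := exists_cover M le_rfl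
  obtain rfl : S = ∅ := Finset.card_eq_zero.1 (by omega)
  simpa using hS
end

section
/- Let S be a measurable space, let κ be a Markov kernel from S to S, let s₀ ∈ S be a point whose singleton {s₀} is measurable, and let q ∈ (0,1] be such that κ(x, {s₀}) ≥ q for every x ∈ S. Then for any two probability measures ν and ν′ on S and every measurable set A, |(ν.bind κ)(A) − (ν′.bind κ)(A)| ≤ (1 − q) · sup_B |ν(B) − ν′(B)|, where the supremum is over measurable sets B. -/
open MeasureTheory ProbabilityTheory

/-- The total-variation distance between two finite measures is a supremum of a bounded family. -/
lemma bddAbove_range_abs_measure_sub {S : Type*} [MeasurableSpace S] (ν ν' : Measure S)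
    [IsFiniteMeasure ν] [IsFiniteMeasure ν'] :
    BddAbove (Set.range fun B : {B : Set S // MeasurableSet B} =>
      |(ν B.1).toReal - (ν' B.1).toReal|) := by
  refine ⟨ν.real Set.univ + ν'.real Set.univ, ?_⟩
  rintro _ ⟨B, rfl⟩
  have h : ν.real B.1 ≤ ν.real Set.univ := measureReal_mono (Set.subset_univ _)
  have h' : ν'.real B.1 ≤ ν'.real Set.univ := measureReal_mono (Set.subset_univ _)
  have h0 : 0 ≤ ν.real B.1 := measureReal_nonneg
  have h0' : 0 ≤ ν'.real B.1 := measureReal_nonneg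
  change |ν.real B.1 - ν'.real B.1| ≤ _
  rw [abs_le]
  constructor <;> linarith

/-- The difference of the integrals of a function with values in `[a, b]` against two probability
measures is at most `b - a` times the total-variation distance. -/
lemma integral_sub_integral_le_mul_iSup_abs_measure_sub {S : Type*} [MeasurableSpace S]
    (ν ν' : Measure S) [IsProbabilityMeasure ν] [IsProbabilityMeasure ν'] {f : S → ℝ}
    (hf : Measurable f) {a b : ℝ} (hab : a ≤ b) (ha : ∀ x, a ≤ f x) (hb : ∀ x, f x ≤ b) :
    ∫ x, f x ∂ν - ∫ x, f x ∂ν' ≤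
      (b - a) * ⨆ B : {B : Set S // MeasurableSet B}, |(ν B.1).toReal - (ν' B.1).toReal| := by
  obtain ⟨P, hP⟩ := exists_isHahnDecomposition ν' ν
  have hPm := hP.measurableSet
  have hint (μ : Measure S) [IsFiniteMeasure μ] : Integrable f μ :=
    Integrable.of_mem_Icc a b hf.aemeasurable (.of_forall fun x => ⟨ha x, hb x⟩)
  have hsplit (μ : Measure S) [IsProbabilityMeasure μ] : ∫ x, f x ∂μ =
      (b * μ.real P - ∫ x in P, (b - f x) ∂μ) + (a * (1 - μ.real P) + ∫ x in Pᶜ, (f x - a) ∂μ) := by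
    rw [← integral_add_compl hPm (hint μ), integral_sub (integrable_const _) (hint _),
      integral_sub (hint _) (integrable_const _), ← probReal_compl_eq_one_sub hPm]
    simp only [integral_const, measureReal_restrict_apply_univ, smul_eq_mul]
    ring
  have hon : ∫ x in P, (b - f x) ∂ν' ≤ ∫ x in P, (b - f x) ∂ν :=
    integral_mono_measure hP.le_on (.of_forall fun x => sub_nonneg.2 (hb x))
      ((integrable_const _).sub (hint _))
  have hoff : ∫ x in Pᶜ, (f x - a) ∂ν ≤ ∫ x in Pᶜ, (f x - a) ∂ν' :=
    integral_mono_measure hP.ge_on_compl (.of_forall fun x => sub_nonneg.2 (ha x))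
      ((hint _).sub (integrable_const _))
  have hsup : ν.real P - ν'.real P ≤
      ⨆ B : {B : Set S // MeasurableSet B}, |(ν B.1).toReal - (ν' B.1).toReal| :=
    (le_abs_self _).trans (le_ciSup (bddAbove_range_abs_measure_sub ν ν') ⟨P, hPm⟩)
  calc ∫ x, f x ∂ν - ∫ x, f x ∂ν' ≤ (b - a) * (ν.real P - ν'.real P) := by
        rw [hsplit ν, hsplit ν']; linarith
    _ ≤ _ := mul_le_mul_of_nonneg_left hsup (sub_nonneg.2 hab)

/-- A Markov kernel charging a point with mass at least `q` everywhere has, on each measurable set,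
an oscillation of at most `1 - q`. -/
lemma exists_forall_le_kernel_real_le {S : Type*} [MeasurableSpace S] (κ : Kernel S S)
    [IsMarkovKernel κ] {s₀ : S} {q : ℝ} (hmin : ∀ x, q ≤ (κ x).real {s₀})
    {A : Set S} (hA : MeasurableSet A) :
    ∃ a, ∀ x, a ≤ (κ x).real A ∧ (κ x).real A ≤ a + (1 - q) := by
  by_cases hs : s₀ ∈ A
  · refine ⟨q, fun x => ⟨(hmin x).trans (measureReal_mono (Set.singleton_subset_iff.2 hs)), ?_⟩⟩
    linarith [measureReal_le_one (μ := κ x) (s := A)]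
  · refine ⟨0, fun x => ⟨measureReal_nonneg, ?_⟩⟩
    have h : (κ x).real {s₀} ≤ (κ x).real Aᶜ := measureReal_mono (Set.singleton_subset_iff.2 hs)
    rw [probReal_compl_eq_one_sub hA] at h
    linarith [hmin x]

lemma toReal_bind_apply_eq_integral {S : Type*} [MeasurableSpace S] (κ : Kernel S S)
    [IsMarkovKernel κ] (ν : Measure S) {A : Set S} (hA : MeasurableSet A) :
    ((ν.bind κ) A).toReal = ∫ x, (κ x).real A ∂ν := by
  rw [Measure.bind_apply hA κ.aemeasurable]
  exact (integral_toReal (κ.measurable_coe hA).aemeasurable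
    (.of_forall fun x => measure_lt_top _ _)).symm

/-- One-step total-variation contraction under a Doeblin-type minorization:
if a Markov kernel `κ` satisfies `κ(x, {s₀}) ≥ q` for all `x`, then for any two
probability measures `ν, ν'` and any measurable `A`,
`|(ν.bind κ)(A) − (ν'.bind κ)(A)| ≤ (1 − q) · sup_B |ν(B) − ν'(B)|`. -/
theorem stmt_9 {S : Type*} [MeasurableSpace S] (κ : Kernel S S) [IsMarkovKernel κ]
    (s₀ : S) (hs₀ : MeasurableSet ({s₀} : Set S))
    (q : ℝ) (hq0 : 0 < q) (hq1 : q ≤ 1)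
    (hmin : ∀ x : S, ENNReal.ofReal q ≤ κ x {s₀})
    (ν ν' : Measure S) [IsProbabilityMeasure ν] [IsProbabilityMeasure ν']
    (A : Set S) (hA : MeasurableSet A) :
    |((ν.bind κ) A).toReal - ((ν'.bind κ) A).toReal| ≤
      (1 - q) * ⨆ B : {B : Set S // MeasurableSet B},
        |(ν B.1).toReal - (ν' B.1).toReal| := by
  have hmin_real (x : S) : q ≤ (κ x).real {s₀} :=
    (ENNReal.ofReal_le_iff_le_toReal (measure_ne_top _ _)).1 (hmin x)
  obtain ⟨a, ha⟩ := exists_forall_le_kernel_real_le κ hmin_real hA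
  have hmeas : Measurable fun x => (κ x).real A := (κ.measurable_coe hA).ennreal_toReal
  have hle (μ μ' : Measure S) [IsProbabilityMeasure μ] [IsProbabilityMeasure μ'] :=
    integral_sub_integral_le_mul_iSup_abs_measure_sub μ μ' hmeas
      (show a ≤ a + (1 - q) by linarith) (fun x => (ha x).1) (fun x => (ha x).2)
  simp only [add_sub_cancel_left] at hle
  rw [toReal_bind_apply_eq_integral κ ν hA, toReal_bind_apply_eq_integral κ ν' hA]
  refine abs_sub_le_iff.2 ⟨hle ν ν', ?_⟩
  simpa only [abs_sub_comm] using hle ν' ν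
end

section
/- Let S be a measurable space, let κ be a Markov kernel from S to S, let s₀ ∈ S be a point whose singleton {s₀} is measurable, and let q ∈ (0,1] be such that κ(x, {s₀}) ≥ q for every x ∈ S. Then there exists a probability measure μ on S that is invariant for κ, i.e. μ.bind κ = μ. -/
open MeasureTheory ProbabilityTheory

namespace ProbabilityTheory.Kernel

variable {S : Type*} [MeasurableSpace S]

/-- The law at time `n` of the chain with kernel `κ` started from `a`, restricted to the event that
the chain stays in `A` at the times `1, …, n`. -/
noncomputable def tabooLaw (κ : Kernel S S) (A : Set S) (a : S) : ℕ → Measure S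
  | 0 => Measure.dirac a
  | n + 1 => ((tabooLaw κ A a n).bind κ).restrict A

/-- The expected occupation measure of the chain started from `a`, up to its first exit
from `A` after time `0`. -/
noncomputable def occupationMeasure (κ : Kernel S S) (A : Set S) (a : S) : Measure S :=
  Measure.sum (κ.tabooLaw A a)

lemma tabooLaw_univ_le (κ : Kernel S S) {A : Set S} (hA : MeasurableSet A) {r : ENNReal}
    (hr : ∀ x, κ x A ≤ r) (a : S) (n : ℕ) : κ.tabooLaw A a n Set.univ ≤ r ^ n := by
  induction n with
  | zero => simp [tabooLaw]
  | succ n ih =>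
    rw [tabooLaw, Measure.restrict_apply_univ, Measure.bind_apply hA κ.aemeasurable, pow_succ']
    calc ∫⁻ x, κ x A ∂κ.tabooLaw A a n ≤ ∫⁻ _, r ∂κ.tabooLaw A a n := lintegral_mono hr
      _ = r * κ.tabooLaw A a n Set.univ := MeasureTheory.lintegral_const r
      _ ≤ r * r ^ n := by gcongr

lemma isFiniteMeasure_occupationMeasure (κ : Kernel S S) {A : Set S} (hA : MeasurableSet A)
    {r : ENNReal} (hr1 : r < 1) (hr : ∀ x, κ x A ≤ r) (a : S) :
    IsFiniteMeasure (κ.occupationMeasure A a) where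
  measure_univ_lt_top := by
    rw [occupationMeasure, Measure.sum_apply _ MeasurableSet.univ]
    refine (ENNReal.tsum_le_tsum (κ.tabooLaw_univ_le hA hr a)).trans_lt ?_
    rw [ENNReal.tsum_geometric]
    exact ENNReal.inv_lt_top.2 (tsub_pos_of_lt hr1)

lemma occupationMeasure_eq_dirac_add (κ : Kernel S S) {A : Set S} (hA : MeasurableSet A) (a : S) :
    κ.occupationMeasure A a
      = Measure.dirac a + ((κ.occupationMeasure A a).bind κ).restrict A := by
  have hbind : ((κ.occupationMeasure A a).bind κ).restrict A
      = Measure.sum fun n ↦ κ.tabooLaw A a (n + 1) := by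
    simp only [tabooLaw]
    rw [occupationMeasure, Measure.bind_sum _ _ κ.aemeasurable, Measure.restrict_sum _ hA]
  rw [hbind]
  ext s hs
  rw [occupationMeasure, Measure.add_apply, Measure.sum_apply _ hs, Measure.sum_apply _ hs,
    tsum_eq_zero_add' ENNReal.summable]
  simp only [tabooLaw]

/-- If the return time to `a` has finite expectation, then the occupation measure of an excursion
from `a` is invariant. -/
lemma invariant_occupationMeasure (κ : Kernel S S) [IsMarkovKernel κ] {a : S}
    (ha : MeasurableSet ({a} : Set S)) [IsFiniteMeasure (κ.occupationMeasure {a}ᶜ a)] :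
    κ.Invariant (κ.occupationMeasure {a}ᶜ a) := by
  set ν := κ.occupationMeasure {a}ᶜ a
  have hν : ν = Measure.dirac a + (ν.bind κ).restrict {a}ᶜ :=
    κ.occupationMeasure_eq_dirac_add ha.compl a
  have hbind : ν.bind κ = (ν.bind κ) {a} • Measure.dirac a + (ν.bind κ).restrict {a}ᶜ := by
    rw [← Measure.restrict_singleton, Measure.restrict_add_restrict_compl ha]
  have huniv : (ν.bind κ) Set.univ = ν Set.univ := by
    simp [Measure.bind_apply MeasurableSet.univ κ.aemeasurable]
  have hfin : (ν.bind κ).restrict {a}ᶜ Set.univ ≠ ⊤ :=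
    ((Measure.restrict_apply_le _ _).trans_lt (huniv ▸ measure_lt_top ν _)).ne
  have hmass : (ν.bind κ) {a} = 1 := by
    have h₁ := congrArg (fun μ : Measure S ↦ μ Set.univ) hν
    have h₂ := congrArg (fun μ : Measure S ↦ μ Set.univ) hbind
    simp only [Measure.add_apply, Measure.smul_apply, measure_univ, smul_eq_mul, mul_one]
      at h₁ h₂
    exact (ENNReal.add_left_inj hfin).1 (h₂.symm.trans (huniv.trans h₁))
  rw [hmass, one_smul, ← hν] at hbind
  exact hbind

end ProbabilityTheory.Kernel

/-- Existence of an invariant probability measure for a Markov kernel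
satisfying a Doeblin-type minorization `κ(x, {s₀}) ≥ q > 0` at a single state. -/
theorem stmt_10 {S : Type*} [MeasurableSpace S] (κ : Kernel S S) [IsMarkovKernel κ]
    (s₀ : S) (hs₀ : MeasurableSet ({s₀} : Set S))
    (q : ℝ) (hq0 : 0 < q) (hq1 : q ≤ 1)
    (hmin : ∀ x : S, ENNReal.ofReal q ≤ κ x {s₀}) :
    ∃ μ : Measure S, IsProbabilityMeasure μ ∧ μ.bind κ = μ := by
  have hr (x : S) : κ x {s₀}ᶜ ≤ 1 - ENNReal.ofReal q := by
    rw [prob_compl_eq_one_sub hs₀]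
    exact tsub_le_tsub_left (hmin x) 1
  have hr1 : 1 - ENNReal.ofReal q < 1 :=
    ENNReal.sub_lt_self ENNReal.one_ne_top one_ne_zero (ENNReal.ofReal_pos.2 hq0).ne'
  have := κ.isFiniteMeasure_occupationMeasure hs₀.compl hr1 hr s₀
  have hinv := κ.invariant_occupationMeasure hs₀
  have hν := κ.occupationMeasure_eq_dirac_add hs₀.compl s₀
  set ν := κ.occupationMeasure {s₀}ᶜ s₀
  have : NeZero ν := ⟨fun h ↦ by
    simpa [h] using congrArg (fun μ : Measure S ↦ μ Set.univ) hν⟩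
  exact ⟨(ν Set.univ)⁻¹ • ν, inferInstance, by rw [Measure.bind_smul, hinv.def]⟩
end

section
/- Let S be a measurable space, let κ be a Markov kernel from S to S, let s₀ ∈ S be a point whose singleton {s₀} is measurable, and let q ∈ (0,1] be such that κ(x, {s₀}) ≥ q for every x ∈ S. Then the invariant probability measure μ of κ is unique, and for every probability measure ν on S, every n ∈ ℕ, and every measurable set A, |(ν.bind κⁿ)(A) − μ(A)| ≤ (1 − q)^n, where κⁿ denotes the n-fold composition of the kernel κ with itself; in particular, the distribution of the chain started from any initial distribution converges to μ in total variation, geometrically fast. -/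
open MeasureTheory ProbabilityTheory
open scoped ENNReal

section Doeblin

variable {S : Type*} [MeasurableSpace S]

/-- A kernel charging the measurable singleton `{s₀}` with mass at least `c` everywhere splits as
`c • dirac s₀` plus a nonnegative residual kernel. -/
lemma exists_residual_kernel (κ : Kernel S S) {s₀ : S}
    (hs₀ : MeasurableSet ({s₀} : Set S)) {c : ℝ≥0∞} (hmin : ∀ x, c ≤ κ x {s₀}) :
    ∃ η : Kernel S S, ∀ x, κ x = c • Measure.dirac s₀ + η x := by
  have hmeas : Measurable fun x =>
      (κ x).restrict {s₀}ᶜ + (κ x {s₀} - c) • Measure.dirac s₀ := by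
    refine Measure.measurable_of_measurable_coe _ fun A hA => ?_
    simp only [Measure.add_apply, Measure.smul_apply, Measure.restrict_apply hA, smul_eq_mul]
    exact (κ.measurable_coe (hA.inter hs₀.compl)).add
      (((κ.measurable_coe hs₀).sub_const c).mul_const _)
  refine ⟨⟨_, hmeas⟩, fun x => ?_⟩
  change κ x = c • Measure.dirac s₀ + ((κ x).restrict {s₀}ᶜ + (κ x {s₀} - c) • Measure.dirac s₀)
  rw [add_left_comm, ← add_smul, add_tsub_cancel_of_le (hmin x), ← Measure.restrict_singleton,
    add_comm, Measure.restrict_add_restrict_compl hs₀]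

/-- One step of a chain whose kernel splits as `c • dirac s₀ + η`. -/
lemma bind_eq_smul_dirac_add_bind {κ η : Kernel S S} {s₀ : S} {c : ℝ≥0∞}
    (hη : ∀ x, κ x = c • Measure.dirac s₀ + η x) (m : Measure S) :
    m.bind κ = (c * m Set.univ) • Measure.dirac s₀ + m.bind η := by
  ext A hA
  rw [Measure.add_apply, Measure.bind_apply hA κ.aemeasurable,
    Measure.bind_apply hA η.aemeasurable]
  simp only [hη, Measure.add_apply, Measure.smul_apply, smul_eq_mul]
  rw [lintegral_add_left measurable_const, lintegral_const]
  ring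

/-- Iterating a kernel of constant total mass `r` multiplies the total mass by `r ^ n`. -/
lemma iterate_bind_univ {η : Kernel S S} {r : ℝ≥0∞} (hr : ∀ x, η x Set.univ = r)
    (m : Measure S) (n : ℕ) :
    ((fun m : Measure S => m.bind η)^[n] m) Set.univ = r ^ n * m Set.univ := by
  induction n with
  | zero => simp
  | succ n ih =>
    rw [Function.iterate_succ_apply', Measure.bind_apply .univ η.aemeasurable]
    simp only [hr, lintegral_const, ih]
    ring

lemma isProbabilityMeasure_iterate_bind (κ : Kernel S S) [IsMarkovKernel κ]
    (ν : Measure S) [IsProbabilityMeasure ν] (n : ℕ) :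
    IsProbabilityMeasure ((fun m : Measure S => m.bind κ)^[n] ν) :=
  ⟨by rw [iterate_bind_univ (r := 1) (fun x => measure_univ)]; simp⟩

/-- After `n` steps, the dependence on the initial law is carried by the iterated residual
kernel only. -/
lemma exists_iterate_bind_eq_add {κ η : Kernel S S} [IsMarkovKernel κ] {s₀ : S} {c : ℝ≥0∞}
    (hη : ∀ x, κ x = c • Measure.dirac s₀ + η x) (n : ℕ) :
    ∃ σ : Measure S, ∀ ν : Measure S, IsProbabilityMeasure ν →
      (fun m : Measure S => m.bind κ)^[n] ν = σ + (fun m : Measure S => m.bind η)^[n] ν := by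
  induction n with
  | zero => exact ⟨0, fun ν _ => by simp⟩
  | succ n ih =>
    obtain ⟨σ, hσ⟩ := ih
    refine ⟨c • Measure.dirac s₀ + σ.bind η, fun ν hν => ?_⟩
    have := isProbabilityMeasure_iterate_bind κ ν n
    rw [Function.iterate_succ_apply', Function.iterate_succ_apply',
      bind_eq_smul_dirac_add_bind hη, measure_univ, mul_one, hσ ν hν, add_assoc]
    congr 1
    ext A hA
    simp only [Measure.add_apply, Measure.bind_apply hA η.aemeasurable, lintegral_add_measure]

/-- Two laws evolved for `n` steps differ on each set by at most the mass of the `n`-fold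
residual. -/
lemma abs_iterate_bind_sub_le {κ η : Kernel S S} [IsMarkovKernel κ] {s₀ : S} {c : ℝ≥0∞}
    (hη : ∀ x, κ x = c • Measure.dirac s₀ + η x) {r : ℝ} (hr0 : 0 ≤ r)
    (hr : ∀ x, η x Set.univ = ENNReal.ofReal r)
    (ν ν' : Measure S) [IsProbabilityMeasure ν] [IsProbabilityMeasure ν'] (n : ℕ) (A : Set S) :
    |(((fun m : Measure S => m.bind κ)^[n] ν) A).toReal -
      (((fun m : Measure S => m.bind κ)^[n] ν') A).toReal| ≤ r ^ n := by
  obtain ⟨σ, hσ⟩ := exists_iterate_bind_eq_add hη n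
  have hle (m : Measure S) [IsProbabilityMeasure m] :
      ((fun m : Measure S => m.bind η)^[n] m) A ≤ ENNReal.ofReal (r ^ n) := by
    refine (measure_mono (Set.subset_univ A)).trans_eq ?_
    rw [iterate_bind_univ hr, measure_univ, mul_one, ENNReal.ofReal_pow hr0]
  have hσA : σ A ≠ ∞ := by
    have := isProbabilityMeasure_iterate_bind κ ν n
    refine ne_top_of_le_ne_top (measure_ne_top ((fun m : Measure S => m.bind κ)^[n] ν) A) ?_
    rw [hσ ν inferInstance, Measure.add_apply]
    exact le_self_add
  have htop (m : Measure S) [IsProbabilityMeasure m] :=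
    ne_top_of_le_ne_top ENNReal.ofReal_ne_top (hle m)
  have hreal (m : Measure S) [IsProbabilityMeasure m] :=
    ENNReal.toReal_le_of_le_ofReal (pow_nonneg hr0 n) (hle m)
  rw [hσ ν inferInstance, hσ ν' inferInstance, Measure.add_apply, Measure.add_apply,
    ENNReal.toReal_add hσA (htop ν), ENNReal.toReal_add hσA (htop ν'), add_sub_add_left_eq_sub]
  exact abs_sub_le_of_nonneg_of_le ENNReal.toReal_nonneg (hreal ν) ENNReal.toReal_nonneg (hreal ν')

/-- The invariant law is the geometric series of the iterated residual kernel from `s₀`. -/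
lemma exists_invariant_of_residual {κ η : Kernel S S} {s₀ : S} {c r : ℝ≥0∞}
    (hη : ∀ x, κ x = c • Measure.dirac s₀ + η x) (hr : ∀ x, η x Set.univ = r)
    (hc0 : c ≠ 0) (hctop : c ≠ ∞) (hcr : 1 - r = c) :
    ∃ μ : Measure S, IsProbabilityMeasure μ ∧ μ.bind κ = μ := by
  set ρ : ℕ → Measure S := fun n => (fun m : Measure S => m.bind η)^[n] (Measure.dirac s₀)
  have hmass : (c • Measure.sum ρ) Set.univ = 1 := by
    simp only [Measure.smul_apply, smul_eq_mul, Measure.sum_apply _ MeasurableSet.univ, ρ,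
      iterate_bind_univ hr, measure_univ, mul_one, ENNReal.tsum_geometric, hcr]
    exact ENNReal.mul_inv_cancel hc0 hctop
  refine ⟨c • Measure.sum ρ, ⟨hmass⟩, ?_⟩
  rw [bind_eq_smul_dirac_add_bind hη, hmass, mul_one]
  ext A hA
  have hstep (n : ℕ) : ∫⁻ x, η x A ∂ρ n = ρ (n + 1) A := by
    simp only [ρ, Function.iterate_succ_apply']
    rw [Measure.bind_apply hA η.aemeasurable]
  rw [Measure.add_apply, Measure.bind_apply hA η.aemeasurable, lintegral_smul_measure,
    lintegral_sum_measure, Measure.smul_apply, Measure.smul_apply, Measure.sum_apply _ hA,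
    tsum_eq_zero_add' (f := fun n => ρ n A) ENNReal.summable, smul_add]
  simp only [hstep, ρ, Function.iterate_zero, id]

end Doeblin

/-- Uniqueness of the invariant probability measure and geometric convergence in
total variation under a Doeblin-type minorization `κ(x, {s₀}) ≥ q > 0`: the
distribution after `n` steps from any initial probability measure `ν` (i.e.
`ν.bind κⁿ`, the `n`-fold iterate of one-step evolution) is within `(1 − q)^n`
of the invariant measure `μ` on every measurable set. -/
theorem stmt_11 {S : Type*} [MeasurableSpace S] (κ : Kernel S S) [IsMarkovKernel κ]
    (s₀ : S) (hs₀ : MeasurableSet ({s₀} : Set S))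
    (q : ℝ) (hq0 : 0 < q) (hq1 : q ≤ 1)
    (hmin : ∀ x : S, ENNReal.ofReal q ≤ κ x {s₀}) :
    ∃ μ : Measure S, (IsProbabilityMeasure μ ∧ μ.bind κ = μ) ∧
      (∀ μ' : Measure S, IsProbabilityMeasure μ' → μ'.bind κ = μ' → μ' = μ) ∧
      ∀ ν : Measure S, IsProbabilityMeasure ν → ∀ n : ℕ, ∀ A : Set S,
        MeasurableSet A →
          |(((fun m : Measure S => m.bind κ)^[n] ν) A).toReal - (μ A).toReal| ≤
            (1 - q) ^ n := by
  have hr : ENNReal.ofReal (1 - q) = 1 - ENNReal.ofReal q := by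
    rw [ENNReal.ofReal_sub _ hq0.le, ENNReal.ofReal_one]
  have hq1' : ENNReal.ofReal q ≤ 1 := ENNReal.ofReal_le_one.2 hq1
  obtain ⟨η, hη⟩ := exists_residual_kernel κ hs₀ hmin
  have hηr (x : S) : η x Set.univ = ENNReal.ofReal (1 - q) := by
    have h : κ x Set.univ = _ := congrArg (fun m : Measure S => m Set.univ) (hη x)
    simp only [Measure.add_apply, Measure.smul_apply, measure_univ, smul_eq_mul, mul_one] at h
    rw [hr, h, ENNReal.add_sub_cancel_left ENNReal.ofReal_ne_top]
  obtain ⟨μ, hμ, hinv⟩ := exists_invariant_of_residual hη hηr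
    (ENNReal.ofReal_pos.2 hq0).ne' ENNReal.ofReal_ne_top
    (by rw [hr, ENNReal.sub_sub_cancel ENNReal.one_ne_top hq1'])
  have hconv (ν : Measure S) (_ : IsProbabilityMeasure ν) (n : ℕ) (A : Set S) :
      |(((fun m : Measure S => m.bind κ)^[n] ν) A).toReal - (μ A).toReal| ≤ (1 - q) ^ n := by
    have h := abs_iterate_bind_sub_le hη (sub_nonneg.2 hq1) hηr ν μ n A
    rwa [Function.iterate_fixed (f := fun m : Measure S => m.bind κ) hinv] at h
  refine ⟨μ, ⟨hμ, hinv⟩, fun μ' hμ' hinv' => ?_, fun ν hν n A _ => hconv ν hν n A⟩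
  ext A -
  rw [← ENNReal.toReal_eq_toReal_iff' (measure_ne_top _ _) (measure_ne_top _ _), ← sub_eq_zero,
    ← abs_nonpos_iff]
  refine ge_of_tendsto' (tendsto_pow_atTop_nhds_zero_of_lt_one (sub_nonneg.2 hq1)
    (sub_lt_self 1 hq0)) fun n => ?_
  have h := hconv μ' hμ' n A
  rwa [Function.iterate_fixed (f := fun m : Measure S => m.bind κ) hinv'] at h
end
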